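/- Let k be a field, G a group, n ≥ 1, and ρ : G →* GL(n,k) a representation of G on V = kⁿ, with the induced action of G on the polynomial ring k[x₁,…,xₙ] given by (g·f)(w) = f(ρ(g)⁻¹w). Suppose v ∈ V is fixed by every element of G, and f is a G-invariant homogeneous polynomial of degree d > 0 with f(v) ≠ 0, where the characteristic of k does not divide d. Then there exists a G-invariant polynomial of degree 1 (a G-invariant linear form plus possibly no constant term) f̃ with f̃(v) ≠ 0. -/

import Mathlib

open MvPolynomial

/-- The action of a matrix `M` on polynomial functions on `kⁿ`: the `k`-algebra substitution
sending the coordinate `xᵢ` to `∑ⱼ M i j • xⱼ`, i.e. `(M · f)(w) = f (M ᵀ... )`.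
Applied with `M = ρ(g)⁻¹`, this realises the action `(g·f)(w) = f(ρ(g)⁻¹ w)`. -/
noncomputable def matrixSubst {k : Type*} [Field k] {n : ℕ}
    (M : Matrix (Fin n) (Fin n) k) :
    MvPolynomial (Fin n) k →ₐ[k] MvPolynomial (Fin n) k :=
  MvPolynomial.aeval fun i => ∑ j, MvPolynomial.C (M i j) * MvPolynomial.X j

/-!
The differential `d_v f = ∑ᵢ (∂f/∂xᵢ)(v) xᵢ` of `f` at `v` is the required linear form. If a linear
map `M` fixes `v` and satisfies `f ∘ M = f`, then the chain rule at `v` reads `d_v f ∘ M = d_v f`.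
Euler's identity gives `(d_v f)(v) = d · f(v)`, which is nonzero when `char k` does not divide `d`.
-/

section Differential

variable {R σ τ : Type*} [CommSemiring R] [Fintype σ]

theorem derivation_aeval_eq_sum_pderiv {A M : Type*} [CommSemiring A] [Algebra R A]
    [AddCommMonoid M] [Module R M] [Module A M] (D : Derivation R A M) (p : σ → A)
    (f : MvPolynomial σ R) :
    D (aeval p f) = ∑ i, aeval p (pderiv i f) • D (p i) := by
  classical
  induction f using MvPolynomial.induction_on with
  | C a => simp
  | add f g hf hg => simp only [map_add, hf, hg, add_smul, Finset.sum_add_distrib]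
  | mul_X f m hf =>
    simp [hf, pderiv_X, Pi.single_apply, add_smul, mul_smul, Finset.sum_add_distrib,
      Finset.smul_sum, apply_ite]

/-- The differential of `f` at the point `v`, encoded as the linear form `∑ᵢ (∂f/∂xᵢ)(v) xᵢ` in the
variables of `f`. -/
noncomputable def differentialAt (v : σ → R) (f : MvPolynomial σ R) : MvPolynomial σ R :=
  ∑ i, C (eval v (pderiv i f)) * X i

theorem isHomogeneous_differentialAt (v : σ → R) (f : MvPolynomial σ R) :
    (differentialAt v f).IsHomogeneous 1 :=
  IsHomogeneous.sum _ _ _ fun i _ => isHomogeneous_C_mul_X _ i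

theorem differentialAt_bind₁ [Fintype τ] (v : τ → R) (p : σ → MvPolynomial τ R)
    (f : MvPolynomial σ R) :
    differentialAt v (bind₁ p f) =
      bind₁ (fun i => differentialAt v (p i)) (differentialAt (fun i => eval v (p i)) f) := by
  have eval_pderiv (j : τ) : eval v (pderiv j (bind₁ p f)) =
      ∑ i, eval (fun i => eval v (p i)) (pderiv i f) * eval v (pderiv j (p i)) := by
    rw [← aeval_eq_bind₁, derivation_aeval_eq_sum_pderiv]
    simp only [aeval_eq_bind₁, smul_eq_mul, map_sum, map_mul, eval, eval₂Hom_bind₁]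
  simp only [differentialAt, eval_pderiv, map_sum, map_mul, bind₁_C_right, bind₁_X_right,
    Finset.sum_mul, Finset.mul_sum, mul_assoc]
  exact Finset.sum_comm

theorem differentialAt_toMvPolynomial (v : σ → R) (M : Matrix τ σ R) (i : τ) :
    differentialAt v (M.toMvPolynomial i) = M.toMvPolynomial i := by
  classical
  simp [differentialAt, Matrix.toMvPolynomial, ← C_mul_X_eq_monomial, pderiv_X, Pi.single_apply]

theorem bind₁_differentialAt_of_bind₁_eq {M : Matrix σ σ R} {v : σ → R} {f : MvPolynomial σ R}
    (hv : M.mulVec v = v) (hf : bind₁ M.toMvPolynomial f = f) :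
    bind₁ M.toMvPolynomial (differentialAt v f) = differentialAt v f := by
  have h := differentialAt_bind₁ v M.toMvPolynomial f
  simpa only [hf, differentialAt_toMvPolynomial, Matrix.toMvPolynomial_eval_eq_apply, hv]
    using h.symm

theorem eval_differentialAt_self {f : MvPolynomial σ R} {d : ℕ} (hf : f.IsHomogeneous d)
    (v : σ → R) : eval v (differentialAt v f) = d * eval v f := by
  simpa [differentialAt, mul_comm] using congrArg (eval v) hf.sum_X_mul_pderiv

end Differential

theorem matrixSubst_eq_bind₁ {k : Type*} [Field k] {n : ℕ} (M : Matrix (Fin n) (Fin n) k) :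
    matrixSubst M = bind₁ M.toMvPolynomial := by
  ext1 i
  simp [matrixSubst, Matrix.toMvPolynomial, C_mul_X_eq_monomial]

theorem exists_invariant_linear_form_of_invariant_homogeneous_general
    {R σ ι : Type*} [CommSemiring R] [Fintype σ] (M : ι → Matrix σ σ R) (v : σ → R)
    (hv : ∀ i, (M i).mulVec v = v) (f : MvPolynomial σ R) (d : ℕ) (hhom : f.IsHomogeneous d)
    (hinv : ∀ i, bind₁ (M i).toMvPolynomial f = f) (hfv : d * eval v f ≠ 0) :
    ∃ ft : MvPolynomial σ R,
      (∀ i, bind₁ (M i).toMvPolynomial ft = ft) ∧ ft.IsHomogeneous 1 ∧ eval v ft ≠ 0 :=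
  ⟨differentialAt v f, fun i => bind₁_differentialAt_of_bind₁_eq (hv i) (hinv i),
    isHomogeneous_differentialAt v f, (eval_differentialAt_self hhom v).trans_ne hfv⟩

/-- **Nagata–Miyata.** Let `k` be a field, `G` a group, `n ≥ 1`, and
`ρ : G →* GL(n,k)` a representation of `G` on `V = kⁿ`, with the induced action of `G`
on `k[x₁,…,xₙ]` given by `(g·f)(w) = f(ρ(g)⁻¹ w)`. Suppose `v ∈ V` is fixed by every
element of `G`, and `f` is a `G`-invariant homogeneous polynomial of degree `d > 0`
with `f(v) ≠ 0`, where the characteristic of `k` does not divide `d`. Then there exists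
a `G`-invariant polynomial `f̃` of degree one with `f̃(v) ≠ 0`. -/
theorem exists_invariant_linear_form_of_invariant_homogeneous
    {k : Type*} [Field k] {G : Type*} [Group G] {n : ℕ} (hn : 1 ≤ n)
    (ρ : G →* Matrix.GeneralLinearGroup (Fin n) k)
    (v : Fin n → k)
    (hv : ∀ g : G, Matrix.mulVec (↑(ρ g) : Matrix (Fin n) (Fin n) k) v = v)
    (f : MvPolynomial (Fin n) k) (d : ℕ) (hd : 0 < d)
    (hchar : ¬ (ringChar k ∣ d))
    (hhom : f.IsHomogeneous d)
    (hinv : ∀ g : G, matrixSubst (↑(ρ g)⁻¹ : Matrix (Fin n) (Fin n) k) f = f)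
    (hfv : MvPolynomial.eval v f ≠ 0) :
    ∃ ft : MvPolynomial (Fin n) k,
      (∀ g : G, matrixSubst (↑(ρ g)⁻¹ : Matrix (Fin n) (Fin n) k) ft = ft) ∧
      ft.IsHomogeneous 1 ∧ MvPolynomial.eval v ft ≠ 0 := by
  simp only [matrixSubst_eq_bind₁] at hinv ⊢
  exact exists_invariant_linear_form_of_invariant_homogeneous_general _ v
    (fun g => by simpa only [map_inv] using hv g⁻¹) f d hhom hinv
    (mul_ne_zero (mt (ringChar.spec k d).mp hchar) hfv)
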